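/- arXiv:cs/0612120 — 12 statements merged into one kernel-verified Lean document; each statement's English description precedes it below -/
import Mathlib

section
/- Let Σ be a set, 𝒜 a complete lattice satisfying the descending chain condition (every strictly decreasing sequence in 𝒜 is finite), together with a Galois insertion (α, γ) of 𝒜 into the dual lattice of Moore families on Σ. Let F be a set of finitary operations on ℘(Σ). Assume that one of the following holds: (i) for every Moore family ℳ on Σ, α(M(F(ℳ))) = α(M(F(γ(α(ℳ))))); or (ii) for every a ∈ 𝒜, the forward F-complete shell S_F(γ(a)) lies in the image of γ. Then every sequence a₀ = a, a_{i+1} = refine_{f_i}^𝒜(S⃗_i, a_i) with f_i ∈ F and S⃗_i ∈ Refiners_{f_i}^𝒜(a_i) is finite, and whenever such a sequence ends at an element a_n with Refiners_F^𝒜(a_n) = ∅, then a_n = α(S_F(γ(a))). -/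
set_option linter.unusedVariables false

universe u v

variable {X : Type u} {A : Type v}

/-- A Moore family: a collection of subsets closed under arbitrary intersections. -/
def IsMoore (M : Set (Set X)) : Prop := ∀ S ⊆ M, ⋂₀ S ∈ M

/-- The least Moore family containing `C`. -/
def mClose (C : Set (Set X)) : Set (Set X) := ⋂₀ {M | IsMoore M ∧ C ⊆ M}

/-- A disjunctive Moore family: additionally closed under arbitrary unions. -/
def IsDisjMoore (M : Set (Set X)) : Prop := IsMoore M ∧ ∀ S ⊆ M, ⋃₀ S ∈ M

/-- The least disjunctive Moore family containing `C`. -/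
def dClose (C : Set (Set X)) : Set (Set X) := ⋂₀ {M | IsDisjMoore M ∧ C ⊆ M}

/-- The closure operator associated with a Moore family. -/
def mu (M : Set (Set X)) (S : Set X) : Set X := ⋂₀ {T | T ∈ M ∧ S ⊆ T}

/-- The partition (as a setoid) induced by a Moore family:
`s ≡ s'` iff `μ {s} = μ {s'}`. -/
def prS (M : Set (Set X)) : Setoid X :=
  ⟨fun s t => mu M {s} = mu M {t}, ⟨fun _ => rfl, Eq.symm, Eq.trans⟩⟩

/-- The Moore family of all `P`-saturated sets (unions of blocks of `P`). -/
def padS (P : Setoid X) : Set (Set X) := {S | ∀ s ∈ S, ∀ t, P.r s t → t ∈ S}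

/-- `P` refines `Q`: every block of `P` is contained in a block of `Q`. -/
def refines (P Q : Setoid X) : Prop := ∀ s t, P.r s t → Q.r s t

/-- A finitary operation on `℘(X)`: an arity `n` together with a map `℘(X)^n → ℘(X)`. -/
abbrev Op (X : Type u) := (n : ℕ) × ((Fin n → Set X) → Set X)

/-- The image `F(S)` of a set of operations on a collection of subsets. -/
def imageF (F : Set (Op X)) (S : Set (Set X)) : Set (Set X) :=
  {T | ∃ f ∈ F, ∃ args : Fin f.1 → Set X, (∀ i, args i ∈ S) ∧ T = f.2 args}

/-- Forward `F`-completeness: `F(S) ⊆ S`. -/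
def FComplete (F : Set (Op X)) (S : Set (Set X)) : Prop := imageF F S ⊆ S

/-- The forward `F`-complete shell: the least forward `F`-complete Moore family
containing `M`. -/
def shellF (F : Set (Op X)) (M : Set (Set X)) : Set (Set X) :=
  ⋂₀ {B | IsMoore B ∧ FComplete F B ∧ M ⊆ B}

/-- Predecessor operator of a transition relation. -/
def preR (r : X → X → Prop) (S : Set X) : Set X := {s | ∃ t ∈ S, r s t}

/-- The split of a partition `P` by a set `T`: blocks are the nonempty sets
among `B ∩ T` and `B \ T` for blocks `B` of `P`. -/
def splitS (T : Set X) (P : Setoid X) : Setoid X :=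
  ⟨fun s t => P.r s t ∧ (s ∈ T ↔ t ∈ T),
   ⟨fun s => ⟨P.iseqv.refl s, Iff.rfl⟩,
    fun h => ⟨P.iseqv.symm h.1, h.2.symm⟩,
    fun h1 h2 => ⟨P.iseqv.trans h1.1 h2.1, h1.2.trans h2.2⟩⟩⟩

/-- Abstract refinement: `refine_f^A(S, a) = α(M(γ(a) ∪ {f(S)}))`. -/
def refineA [Preorder A] (al : Set (Set X) → A) (ga : A → Set (Set X))
    (f : Op X) (S : Fin f.1 → Set X) (a : A) : A :=
  al (mClose (ga a ∪ {f.2 S}))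

/-- Abstract refiners: tuples in `γ(a)^n` whose refinement is strictly below `a`. -/
def refinersA [Preorder A] (al : Set (Set X) → A) (ga : A → Set (Set X))
    (f : Op X) (a : A) : Set (Fin f.1 → Set X) :=
  {S | (∀ i, S i ∈ ga a) ∧ refineA al ga f S a < a}

/-- One step of the GPT algorithm: refine by some refiner of some `f ∈ F`. -/
def StepA [Preorder A] (F : Set (Op X)) (al : Set (Set X) → A) (ga : A → Set (Set X))
    (a b : A) : Prop :=
  ∃ f ∈ F, ∃ S : Fin f.1 → Set X, S ∈ refinersA al ga f a ∧ b = refineA al ga f S a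

/-- The setoid induced by a collection of sets: `s ≡ t` iff no set of the
collection separates them. -/
def indSetoid (C : Set (Set X)) : Setoid X :=
  ⟨fun s t => ∀ T ∈ C, (s ∈ T ↔ t ∈ T),
   ⟨fun _ _ _ => Iff.rfl, fun h T hT => (h T hT).symm,
    fun h1 h2 T hT => (h1 T hT).trans (h2 T hT)⟩⟩

/-- The block of `P` containing `s`. -/
def blockOf (P : Setoid X) (s : X) : Set X := {t | P.r s t}

/-- The existential-until operator `EU(S₁, S₂)`. -/
def EUset (r : X → X → Prop) (S1 S2 : Set X) : Set X :=
  S2 ∪ {s | s ∈ S1 ∧ ∃ (n : ℕ) (p : ℕ → X), p 0 = s ∧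
    (∀ i < n, p i ∈ S1 ∧ r (p i) (p (i+1))) ∧ p n ∈ S2}


theorem mClose_moore (C : Set (Set X)) : IsMoore (mClose C) := by
  intro S hS M hM
  exact hM.1 S (fun T hT => hS hT M hM)

theorem subset_mClose (C : Set (Set X)) : C ⊆ mClose C := fun T hT M hM => hM.2 hT

theorem mClose_sub {C M : Set (Set X)} (hM : IsMoore M) (h : C ⊆ M) : mClose C ⊆ M :=
  fun T hT => hT M ⟨hM, h⟩

theorem shellF_moore (F : Set (Op X)) (C : Set (Set X)) : IsMoore (shellF F C) := by
  intro S hS M hM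
  exact hM.1 S (fun T hT => hS hT M hM)

theorem shellF_complete (F : Set (Op X)) (C : Set (Set X)) : FComplete F (shellF F C) := by
  rintro T ⟨f, hf, args, h, rfl⟩ M hM
  exact hM.2.1 ⟨f, hf, args, fun i => h i M hM, rfl⟩

theorem subset_shellF (F : Set (Op X)) (C : Set (Set X)) : C ⊆ shellF F C :=
  fun T hT M hM => hM.2.2 hT

theorem stmt0 [CompleteLattice A]
    (hdcc : ∀ g : ℕ → A, ¬ StrictAnti g)
    (al : Set (Set X) → A) (ga : A → Set (Set X))
    (hga : ∀ a : A, IsMoore (ga a))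
    (hadj : ∀ M : Set (Set X), IsMoore M → ∀ a : A, a ≤ al M ↔ M ⊆ ga a)
    (hins : ∀ a : A, al (ga a) = a)
    (F : Set (Op X))
    (hcond : (∀ M : Set (Set X), IsMoore M →
                al (mClose (imageF F M)) = al (mClose (imageF F (ga (al M))))) ∨
             (∀ a : A, shellF F (ga a) ∈ Set.range ga))
    (a : A) :
    (¬ ∃ seq : ℕ → A, seq 0 = a ∧ ∀ i : ℕ, StepA F al ga (seq i) (seq (i + 1))) ∧
    (∀ (n : ℕ) (seq : ℕ → A), seq 0 = a →
      (∀ i < n, StepA F al ga (seq i) (seq (i + 1))) →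
      (∀ f ∈ F, refinersA al ga f (seq n) = ∅) →
      seq n = al (shellF F (ga a))) := by
  have hanti : ∀ b c : A, b ≤ c → ga c ⊆ ga b := fun b c h =>
    (hadj _ (hga c) b).1 (by rw [hins]; exact h)
  have hlt : ∀ b c : A, StepA F al ga b c → c < b := by
    rintro b c ⟨f, hf, S, hS, rfl⟩
    exact hS.2
  refine ⟨?_, ?_⟩
  · rintro ⟨seq, -, h⟩
    exact hdcc seq (strictAnti_nat_of_succ_lt (fun i => hlt _ _ (h i)))
  intro n seq h0 hstep hend
  have hsh : shellF F (ga a) ⊆ ga (al (shellF F (ga a))) :=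
    (hadj _ (shellF_moore F _) _).1 le_rfl
  have hcomp : FComplete F (ga (al (shellF F (ga a)))) := by
    rcases hcond with h | h
    · have h1 := h _ (shellF_moore F (ga a))
      have h2 : al (shellF F (ga a)) ≤ al (mClose (imageF F (shellF F (ga a)))) :=
        (hadj _ (mClose_moore _) _).2
          (mClose_sub (hga _) ((shellF_complete F (ga a)).trans hsh))
      rw [h1] at h2
      exact (subset_mClose _).trans ((hadj _ (mClose_moore _) _).1 h2)
    · obtain ⟨c, hc⟩ := h a
      have h3 : ga (al (shellF F (ga a))) = shellF F (ga a) := by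
        rw [← hc, hins]
      rw [h3]
      exact shellF_complete F _
  have hinv : ∀ i ≤ n, al (shellF F (ga a)) ≤ seq i ∧ seq i ≤ a := by
    intro i
    induction i with
    | zero =>
      intro _
      rw [h0]
      refine ⟨?_, le_rfl⟩
      have h4 := (hadj _ (hga a) (al (shellF F (ga a)))).2 ((subset_shellF F _).trans hsh)
      rwa [hins] at h4
    | succ i ih =>
      intro hi
      obtain ⟨h1, h2⟩ := ih (by omega)
      have hs := hstep i (by omega)
      refine ⟨?_, (hlt _ _ hs).le.trans h2⟩
      obtain ⟨f, hf, S, hS, he⟩ := hs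
      rw [he]
      refine (hadj _ (mClose_moore _) _).2 (mClose_sub (hga _) ?_)
      refine Set.union_subset (hanti _ _ h1) ?_
      rintro T rfl
      exact hcomp ⟨f, hf, S, fun j => hanti _ _ h1 (hS.1 j), rfl⟩
  obtain ⟨h1, h2⟩ := hinv n le_rfl
  refine le_antisymm ?_ h1
  refine (hadj _ (shellF_moore F _) _).2 ?_
  intro T hT
  refine hT _ ⟨hga _, ?_, hanti _ _ h2⟩
  rintro _ ⟨f, hf, S, hS, rfl⟩
  have hle : refineA al ga f S (seq n) ≤ seq n := by
    have h5 := (hadj _ (mClose_moore (ga (seq n) ∪ {f.2 S})) _).1 le_rfl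
    have h6 := (hadj _ (hga (seq n)) _).2
      ((Set.subset_union_left.trans (subset_mClose _)).trans h5)
    rwa [hins] at h6
  have hn : ¬ refineA al ga f S (seq n) < seq n := by
    intro hl
    have : S ∈ refinersA al ga f (seq n) := ⟨hS, hl⟩
    rw [hend f hf] at this
    exact this
  have heq : seq n ≤ refineA al ga f S (seq n) := (eq_of_le_of_not_lt hle hn).ge
  exact (hadj _ (mClose_moore _) _).1 heq (subset_mClose _ (Or.inr rfl))
end

section
/- Let Σ be a set, → a binary relation on Σ, P a partition of Σ and S ⊆ Σ. Then the partition induced by the least Moore family containing all P-saturated sets together with pre_→(S) equals the split of P by pre_→(S): pr(M(pad(P) ∪ {pre_→(S)})) = split(pre_→(S), P). -/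
set_option linter.unusedVariables false

universe u v

variable {X : Type u} {A : Type v}

theorem prS_iff (M : Set (Set X)) (s t : X) :
    mu M {s} = mu M {t} ↔ ∀ T ∈ M, (s ∈ T ↔ t ∈ T) := by
  constructor
  · intro h T hT
    have hs : s ∈ mu M {t} := by
      rw [← h]; intro U hU; exact hU.2 rfl
    have ht : t ∈ mu M {s} := by
      rw [h]; intro U hU; exact hU.2 rfl
    exact ⟨fun a => ht T ⟨hT, by simpa using a⟩, fun a => hs T ⟨hT, by simpa using a⟩⟩
  · intro h
    unfold mu
    congr 1
    ext T
    simp only [Set.mem_setOf_eq, Set.singleton_subset_iff]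
    exact and_congr_right (h T)

theorem mClose_iff (C : Set (Set X)) (s t : X) :
    (∀ T ∈ mClose C, (s ∈ T ↔ t ∈ T)) ↔ ∀ T ∈ C, (s ∈ T ↔ t ∈ T) := by
  constructor
  · intro h T hT
    exact h T (fun M hM => hM.2 hT)
  · intro h T hT
    refine hT {T | s ∈ T ↔ t ∈ T} ⟨?_, h⟩
    intro D hD
    exact ⟨fun a U hU => (hD hU).1 (a U hU), fun a U hU => (hD hU).2 (a U hU)⟩

theorem stmt4 (r : X → X → Prop) (P : Setoid X) (S : Set X) :
    prS (mClose (padS P ∪ {preR r S})) = splitS (preR r S) P := by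
  apply Setoid.ext
  intro s t
  change mu _ {s} = mu _ {t} ↔ (P.r s t ∧ (s ∈ preR r S ↔ t ∈ preR r S))
  rw [prS_iff, mClose_iff]
  constructor
  · intro h
    refine ⟨?_, h _ (Or.inr rfl)⟩
    have hb : {x | P.r s x} ∈ padS P := fun a ha b hab => P.iseqv.trans ha hab
    exact (h _ (Or.inl hb)).1 (P.iseqv.refl s)
  · rintro ⟨h1, h2⟩ T (hT | hT)
    · exact ⟨fun a => hT s a t h1, fun a => hT t a s (P.iseqv.symm h1)⟩
    · rw [Set.mem_singleton_iff.1 hT]; exact h2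
end

section
/- Let Σ be a set, → a binary relation on Σ, and P a partition of Σ. The following are equivalent: (1) P is PT stable, i.e. for all blocks B, B' ∈ P, either B ⊆ pre_→(B') or B ∩ pre_→(B') = ∅; (2) for every P-saturated set S ⊆ Σ, pre_→(S) is P-saturated (i.e. pad(P) is forward complete for pre_→); (3) for every P-saturated set S, split(pre_→(S), P) = P. Moreover, for any P-saturated S, split(pre_→(S), P) ≠ P if and only if pre_→(S) is not P-saturated. -/
set_option linter.unusedVariables false

universe u v

variable {X : Type u} {A : Type v}

theorem split_eq_iff_aux (T : Set X) (P : Setoid X) : splitS T P = P ↔ T ∈ padS P := by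
  constructor
  · intro h s hs t hst
    have h1 : (splitS T P).r s t := by rw [h]; exact hst
    exact h1.2.1 hs
  · intro h
    apply Setoid.ext
    intro a b
    exact ⟨fun h1 => h1.1, fun h1 => ⟨h1, fun ha => h a ha b h1,
      fun hb => h b hb a (P.iseqv.symm h1)⟩⟩

theorem stmt5 (r : X → X → Prop) (P : Setoid X) :
    ((∀ s t : X, blockOf P s ⊆ preR r (blockOf P t) ∨
        blockOf P s ∩ preR r (blockOf P t) = ∅) ↔
      (∀ S ∈ padS P, preR r S ∈ padS P)) ∧
    ((∀ S ∈ padS P, preR r S ∈ padS P) ↔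
      (∀ S ∈ padS P, splitS (preR r S) P = P)) ∧
    (∀ S ∈ padS P, (splitS (preR r S) P ≠ P ↔ preR r S ∉ padS P)) := by
  refine ⟨⟨?_, ?_⟩, ?_, ?_⟩
  · rintro h S hS s ⟨u, hu, hsu⟩ t hst
    have hs : s ∈ preR r (blockOf P u) := ⟨u, P.iseqv.refl u, hsu⟩
    rcases h s u with h1 | h1
    · obtain ⟨w, hw, htw⟩ := h1 hst
      exact ⟨w, hS u hu w hw, htw⟩
    · exact absurd (show s ∈ blockOf P s ∩ preR r (blockOf P u) from ⟨P.iseqv.refl s, hs⟩)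
        (by rw [h1]; exact fun h => h)
  · intro h s t
    have hb : blockOf P t ∈ padS P := fun a ha b hab => P.iseqv.trans ha hab
    have hp := h _ hb
    rcases Set.eq_empty_or_nonempty (blockOf P s ∩ preR r (blockOf P t)) with h1 | ⟨x, hx, hx'⟩
    · exact Or.inr h1
    · exact Or.inl fun y hy => hp x hx' y (P.iseqv.trans (P.iseqv.symm hx) hy)
  · exact forall₂_congr fun S _ => (split_eq_iff_aux _ P).symm
  · exact fun S _ => not_congr (split_eq_iff_aux _ P)
end

section
/- Let Σ be a set and (α, γ) a Galois insertion of a complete lattice 𝒜 into the dual lattice of Moore families on Σ. Then for every a ∈ 𝒜, every finitary operation f on ℘(Σ) of arity n, and every tuple S⃗ ∈ γ(a)^n: α(M(γ(a) ∪ {f(S⃗)})) < a if and only if f(S⃗) ∉ γ(a). Consequently, the abstract refiners of a coincide with the concrete refiners of the Moore family γ(a). -/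
set_option linter.unusedVariables false

universe u v

variable {X : Type u} {A : Type v}

theorem stmt8 [CompleteLattice A]
    (al : Set (Set X) → A) (ga : A → Set (Set X))
    (hga : ∀ a : A, IsMoore (ga a))
    (hadj : ∀ M : Set (Set X), IsMoore M → ∀ a : A, a ≤ al M ↔ M ⊆ ga a)
    (hins : ∀ a : A, al (ga a) = a)
    (a : A) (f : Op X) :
    (∀ S : Fin f.1 → Set X, (∀ i, S i ∈ ga a) →
      (al (mClose (ga a ∪ {f.2 S})) < a ↔ f.2 S ∉ ga a)) ∧
    refinersA al ga f a =
      {S : Fin f.1 → Set X | (∀ i, S i ∈ ga a) ∧ ga a ⊂ mClose (ga a ∪ {f.2 S})} := by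
  have hN : ∀ C : Set (Set X), IsMoore (mClose C) := by
    intro C S hS M hM
    exact hM.1 S (fun T hT => hS hT M hM)
  have hsub : ∀ C : Set (Set X), C ⊆ mClose C := fun C T hT M hM => hM.2 hT
  have hsubiff : ∀ T : Set X, mClose (ga a ∪ {T}) ⊆ ga a ↔ T ∈ ga a := by
    intro T
    constructor
    · intro h
      exact h (hsub _ (Or.inr rfl))
    · intro h U hU
      refine hU (ga a) ⟨hga a, ?_⟩
      rintro V (hV | hV)
      · exact hV
      · rw [Set.mem_singleton_iff.1 hV]
        exact h
  have hle : ∀ T : Set X, al (mClose (ga a ∪ {T})) ≤ a := by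
    intro T
    have h1 := (hadj _ (hN (ga a ∪ {T})) _).1 le_rfl
    have h2 := (hadj (ga a) (hga a) (al (mClose (ga a ∪ {T})))).2
      (fun U hU => h1 (hsub _ (Or.inl hU)))
    rwa [hins] at h2
  have key : ∀ T : Set X, al (mClose (ga a ∪ {T})) < a ↔ T ∉ ga a := by
    intro T
    rw [lt_iff_le_not_ge, hadj _ (hN _), hsubiff]
    exact ⟨fun h => h.2, fun h => ⟨hle T, h⟩⟩
  refine ⟨fun S _ => key _, ?_⟩
  ext S
  refine and_congr_right fun _ => ?_
  refine (key _).trans ?_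
  rw [← hsubiff]
  exact ⟨fun h => ⟨fun U hU => hsub _ (Or.inl hU), h⟩, fun h => h.2⟩
end

section
/- Let Σ be a set, → a binary relation on Σ, and P a partition of Σ. If for all blocks B₁, B₂ ∈ P the set EU(B₁, B₂) is P-saturated, then for all P-saturated sets S₁, S₂ ⊆ Σ, the set EU(S₁, S₂) is P-saturated. -/
set_option linter.unusedVariables false

universe u v

variable {X : Type u} {A : Type v}

inductive UU (r : X → X → Prop) (S1 S2 : Set X) : X → Prop
  | base (s : X) : s ∈ S2 → UU r S1 S2 s
  | step (s t : X) : s ∈ S1 → r s t → UU r S1 S2 t → UU r S1 S2 s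

theorem UU_of_path (r : X → X → Prop) (S1 S2 : Set X) (n : ℕ) : ∀ p : ℕ → X,
    (∀ i < n, p i ∈ S1 ∧ r (p i) (p (i+1))) → p n ∈ S2 → UU r S1 S2 (p 0) := by
  induction n with
  | zero => intro p _ h; exact UU.base _ h
  | succ n ih =>
    intro p hp h
    refine UU.step _ (p 1) (hp 0 (by omega)).1 (hp 0 (by omega)).2 ?_
    exact ih (fun i => p (i+1)) (fun i hi => hp (i+1) (by omega)) h

theorem mem_EUset_iff (r : X → X → Prop) (S1 S2 : Set X) (s : X) :
    s ∈ EUset r S1 S2 ↔ UU r S1 S2 s := by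
  constructor
  · rintro (h | ⟨_, n, p, rfl, hp, hn⟩)
    · exact UU.base _ h
    · exact UU_of_path r S1 S2 n p hp hn
  · intro h
    induction h with
    | base s h => exact Or.inl h
    | step s t hs hr _ ih =>
      right
      refine ⟨hs, ?_⟩
      rcases ih with h | ⟨_, n, p, h0, hp, hn⟩
      · refine ⟨1, fun i => if i = 0 then s else t, by simp, ?_, by simpa using h⟩
        intro i hi
        obtain rfl : i = 0 := by omega
        simpa using ⟨hs, hr⟩
      · refine ⟨n+1, fun i => Nat.casesOn i s p, rfl, ?_, hn⟩
        intro i hi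
        cases i with
        | zero => exact ⟨hs, by simpa [h0] using hr⟩
        | succ i => exact hp i (by omega)

theorem stmt9 (r : X → X → Prop) (P : Setoid X)
    (h : ∀ B1 ∈ P.classes, ∀ B2 ∈ P.classes, EUset r B1 B2 ∈ padS P) :
    ∀ S1 ∈ padS P, ∀ S2 ∈ padS P, EUset r S1 S2 ∈ padS P := by
  intro S1 hS1 S2 hS2 s hs
  rw [mem_EUset_iff] at hs
  suffices H : ∀ t, P.r s t → UU r S1 S2 t from
    fun t ht => (mem_EUset_iff r S1 S2 t).2 (H t ht)
  induction hs with
  | base s h0 => exact fun t ht => UU.base _ (hS2 s h0 t ht)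
  | step s s' h1 hr _ ih =>
    intro t ht
    have key : UU r {x | P.r x s} {x | P.r x s'} t := by
      rw [← mem_EUset_iff]
      refine h _ ⟨s, rfl⟩ _ ⟨s', rfl⟩ s ?_ t ht
      rw [mem_EUset_iff]
      exact UU.step _ s' (P.iseqv.refl s) hr (UU.base _ (P.iseqv.refl s'))
    clear ht
    induction key with
    | base x hx => exact ih x (P.iseqv.symm hx)
    | step x y hx hxy _ ih2 =>
      exact UU.step _ y (hS1 s h1 x (P.iseqv.symm hx)) hxy ih2
end

section
/- Let Σ be a set and 𝒜 a disjunctive Moore family on Σ with associated closure μ. Then for every S ⊆ Σ: μ(S) = ⋃{B ∈ pr(𝒜) : there exists C ∈ pr(𝒜) with C ∩ S ≠ ∅ and μ(B) ⊆ μ(C)}. -/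
set_option linter.unusedVariables false

universe u v

variable {X : Type u} {A : Type v}

theorem mu_sub_of_mem (M : Set (Set X)) {S T : Set X} (hT : T ∈ M) (h : S ⊆ T) : mu M S ⊆ T :=
  fun _ hx => hx T ⟨hT, h⟩

theorem sub_mu_self (M : Set (Set X)) (S : Set X) : S ⊆ mu M S :=
  fun _ hx _ hT => hT.2 hx

theorem mu_mono_sub (M : Set (Set X)) {S T : Set X} (h : S ⊆ T) : mu M S ⊆ mu M T :=
  fun _ hx U hU => hx U ⟨hU.1, h.trans hU.2⟩

theorem mu_class_eq (M : Set (Set X)) {C : Set X} (hC : C ∈ (prS M).classes) {c : X} (hc : c ∈ C) :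
    mu M C = mu M {c} := by
  obtain ⟨y, rfl⟩ := hC
  have hc' : mu M {c} = mu M {y} := hc
  apply Set.Subset.antisymm
  · intro x hx T hT
    refine hx T ⟨hT.1, fun d hd => ?_⟩
    have hd' : mu M {d} = mu M {y} := hd
    have h1 : d ∈ mu M {c} := by
      rw [hc', ← hd']
      exact sub_mu_self M {d} rfl
    exact mu_sub_of_mem M hT.1 hT.2 h1
  · exact mu_mono_sub M (Set.singleton_subset_iff.2 hc)

theorem stmt10 (M : Set (Set X)) (hM : IsDisjMoore M) (S : Set X) :
    mu M S = ⋃₀ {B | B ∈ (prS M).classes ∧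
      ∃ C ∈ (prS M).classes, (C ∩ S).Nonempty ∧ mu M B ⊆ mu M C} := by
  have mem : ∀ U, mu M U ∈ M := fun U => hM.1 _ (fun T hT => hT.1)
  apply Set.Subset.antisymm
  · intro x hx
    have hU : ⋃₀ {T | ∃ s ∈ S, T = mu M {s}} ∈ M := by
      apply hM.2
      rintro T ⟨s, _, rfl⟩
      exact mem _
    obtain ⟨T, ⟨s, hs, rfl⟩, hxs⟩ := mu_sub_of_mem M hU
      (fun s hs => ⟨mu M {s}, ⟨s, hs, rfl⟩, sub_mu_self M {s} rfl⟩) hx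
    have kx : x ∈ {z | (prS M) z x} := (prS M).refl x
    have ks : s ∈ {z | (prS M) z s} := (prS M).refl s
    refine ⟨{z | (prS M) z x}, ⟨(prS M).mem_classes x, {z | (prS M) z s},
      (prS M).mem_classes s, ⟨s, ks, hs⟩, ?_⟩, kx⟩
    rw [mu_class_eq M ((prS M).mem_classes x) kx, mu_class_eq M ((prS M).mem_classes s) ks]
    exact mu_sub_of_mem M (mem _) (Set.singleton_subset_iff.2 hxs)
  · rintro x ⟨B, ⟨hB, C, hC, ⟨s, hsC, hsS⟩, hBC⟩, hx⟩
    have h := hBC (sub_mu_self M B hx)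
    rw [mu_class_eq M hC hsC] at h
    exact mu_mono_sub M (Set.singleton_subset_iff.2 hsS) h
end

section
/- Let Σ be a set, 𝒜 a disjunctive Moore family on Σ with closure μ, S ⊆ Σ, and 𝒜' = D(𝒜 ∪ {S}) with closure μ'. Let B', C' be blocks of pr(𝒜') and let parent(B') denote the unique block of pr(𝒜) containing B'. Then: (i) if B' ∩ S = ∅, then μ'(C') ⊆ μ'(B') if and only if C' ⊆ μ(parent(B')); (ii) if B' ∩ S ≠ ∅, then μ'(C') ⊆ μ'(B') if and only if C' ⊆ μ(parent(B')) ∩ S. -/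
set_option linter.unusedVariables false

universe u v

variable {X : Type u} {A : Type v}

theorem mem_mu1 (D : Set (Set X)) (x y : X) : y ∈ mu D {x} ↔ ∀ T ∈ D, x ∈ T → y ∈ T := by
  simp only [mu, Set.mem_sInter, Set.mem_setOf_eq, Set.singleton_subset_iff, and_imp]

theorem mu_block (D : Set (Set X)) (B : Set X) (hB : B ∈ (prS D).classes) (x : X) (hx : x ∈ B) :
    mu D B = mu D {x} := by
  obtain ⟨z, rfl⟩ := hB
  have hx' : mu D {x} = mu D {z} := hx
  ext y
  rw [mem_mu1]
  constructor
  · intro hy T hT hxT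
    refine hy T ⟨hT, ?_⟩
    intro t ht
    have ht' : mu D {t} = mu D {z} := ht
    have : t ∈ mu D {x} := by
      rw [hx', ← ht', mem_mu1]
      exact fun _ _ h => h
    exact (mem_mu1 D x t).1 this T hT hxT
  · rintro hy T ⟨hT, hBT⟩
    exact hy T hT (hBT hx)

theorem mu_sub (D : Set (Set X)) (B C : Set X) : mu D C ⊆ mu D B ↔ C ⊆ mu D B := by
  constructor
  · intro h c hc
    exact h (fun T hT => hT.2 hc)
  · intro h y hy T hT
    exact hy T ⟨hT.1, fun c hc => h hc T hT⟩

theorem mem_mu_dClose (N : Set (Set X)) (x y : X) :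
    y ∈ mu (dClose N) {x} ↔ ∀ T ∈ N, x ∈ T → y ∈ T := by
  rw [mem_mu1]
  constructor
  · intro h T hT
    exact h T (fun K hK => hK.2 hT)
  · intro h T hT
    refine hT {T | x ∈ T → y ∈ T} ⟨⟨?_, ?_⟩, h⟩
    · intro K hK hx U hU
      exact hK hU (hx U hU)
    · rintro K hK ⟨U, hU, hx⟩
      exact ⟨U, hU, hK hU hx⟩

theorem stmt12 (M : Set (Set X)) (hM : IsDisjMoore M) (S : Set X)
    (B' C' : Set X)
    (hB' : B' ∈ (prS (dClose (M ∪ {S}))).classes)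
    (hC' : C' ∈ (prS (dClose (M ∪ {S}))).classes)
    (PB : Set X) (hPB : PB ∈ (prS M).classes) (hBP : B' ⊆ PB) :
    (B' ∩ S = ∅ →
      (mu (dClose (M ∪ {S})) C' ⊆ mu (dClose (M ∪ {S})) B' ↔ C' ⊆ mu M PB)) ∧
    ((B' ∩ S).Nonempty →
      (mu (dClose (M ∪ {S})) C' ⊆ mu (dClose (M ∪ {S})) B' ↔ C' ⊆ mu M PB ∩ S)) := by
  have key : ∀ x ∈ B', mu M PB = mu M {x} ∧ mu (dClose (M ∪ {S})) B' =
      {y | y ∈ mu M {x} ∧ (x ∈ S → y ∈ S)} := by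
    intro x hx
    refine ⟨mu_block M PB hPB x (hBP hx), ?_⟩
    rw [mu_block _ B' hB' x hx]
    ext y
    rw [mem_mu_dClose, Set.mem_setOf_eq, mem_mu1]
    constructor
    · intro h
      exact ⟨fun T hT => h T (Or.inl hT), h S (Or.inr rfl)⟩
    · rintro ⟨h1, h2⟩ T (hT | rfl)
      · exact h1 T hT
      · exact h2
  rw [mu_sub]
  constructor
  · intro he
    obtain ⟨z, hz⟩ := hB'
    have hzB : z ∈ B' := by
      rw [hz]
      exact (prS (dClose (M ∪ {S}))).refl z
    have hzS : z ∉ S := fun h => (Set.eq_empty_iff_forall_notMem.1 he z) ⟨hzB, h⟩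
    obtain ⟨h1, h2⟩ := key z hzB
    rw [h1, h2]
    simp [hzS]
  · rintro ⟨x, hxB, hxS⟩
    obtain ⟨h1, h2⟩ := key x hxB
    rw [h1, h2]
    simp only [hxS, true_imp_iff]
    rfl
end

section
/- Let Σ be a set, 𝒜 a disjunctive Moore family on Σ with closure μ, S ⊆ Σ, and 𝒜' = D(𝒜 ∪ {S}) with closure μ'. Then for all x, y ∈ Σ: (a) if x ∈ S then μ'({x}) = μ({x}) ∩ S, and if x ∉ S then μ'({x}) = μ({x}); (b) μ'({x}) ⊆ μ'({y}) if and only if μ({x}) ⊆ μ({y}) and (y ∈ S implies x ∈ S). -/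
set_option linter.unusedVariables false

universe u v

variable {X : Type u} {A : Type v}

theorem mem_mu_aux (M : Set (Set X)) (x z : X) :
    z ∈ mu M {x} ↔ ∀ T ∈ M, x ∈ T → z ∈ T := by
  simp [mu]

theorem mem_mu_dClose_aux (C : Set (Set X)) (x z : X) :
    z ∈ mu (dClose C) {x} ↔ ∀ T ∈ C, x ∈ T → z ∈ T := by
  rw [mem_mu_aux]
  constructor
  · intro h T hT
    exact h T (fun N hN => hN.2 hT)
  · intro h T hT
    refine hT {T | x ∈ T → z ∈ T} ⟨⟨?_, ?_⟩, h⟩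
    · intro F hF hx T hT
      exact hF hT (hx T hT)
    · rintro F hF ⟨T, hT, hx⟩
      exact ⟨T, hT, hF hT hx⟩

theorem mem_mu_union_aux (M : Set (Set X)) (S : Set X) (x z : X) :
    z ∈ mu (dClose (M ∪ {S})) {x} ↔ z ∈ mu M {x} ∧ (x ∈ S → z ∈ S) := by
  rw [mem_mu_dClose_aux, mem_mu_aux]
  constructor
  · intro h
    exact ⟨fun T hT => h T (Or.inl hT), h S (Or.inr rfl)⟩
  · rintro ⟨h1, h2⟩ T (hT | rfl)
    · exact h1 T hT
    · exact h2

theorem stmt13 (M : Set (Set X)) (hM : IsDisjMoore M) (S : Set X) (x y : X) :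
    (x ∈ S → mu (dClose (M ∪ {S})) {x} = mu M {x} ∩ S) ∧
    (x ∉ S → mu (dClose (M ∪ {S})) {x} = mu M {x}) ∧
    (mu (dClose (M ∪ {S})) {x} ⊆ mu (dClose (M ∪ {S})) {y} ↔
      (mu M {x} ⊆ mu M {y} ∧ (y ∈ S → x ∈ S))) := by
  refine ⟨?_, ?_, ?_⟩
  · intro hx
    ext z
    rw [mem_mu_union_aux]
    exact ⟨fun h => ⟨h.1, h.2 hx⟩, fun h => ⟨h.1, fun _ => h.2⟩⟩
  · intro hx
    ext z
    rw [mem_mu_union_aux]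
    exact ⟨fun h => h.1, fun h => ⟨h, fun h' => absurd h' hx⟩⟩
  · constructor
    · intro h
      have hx : x ∈ mu (dClose (M ∪ {S})) {y} := h ((mem_mu_aux _ _ _).2 fun _ _ h => h)
      rw [mem_mu_union_aux, mem_mu_aux] at hx
      refine ⟨fun z hz => ?_, hx.2⟩
      rw [mem_mu_aux] at hz ⊢
      exact fun T hT hy => hz T hT (hx.1 T hT hy)
    · rintro ⟨h1, h2⟩ z hz
      rw [mem_mu_union_aux] at hz ⊢
      exact ⟨h1 hz.1, fun hy => hz.2 (h2 hy)⟩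
end

section
/- Let Σ be a set. A Moore family ℳ on Σ equals pad(P) for some partition P of Σ (i.e. ℳ is partitioning) if and only if ℳ is closed under set complement, that is, X ∈ ℳ implies Σ ∖ X ∈ ℳ. In that case, P = pr(ℳ). -/
set_option linter.unusedVariables false

universe u v

variable {X : Type u} {A : Type v}

theorem prS_iff_aux (M : Set (Set X)) (s t : X) :
    (prS M).r s t ↔ ∀ T ∈ M, (s ∈ T ↔ t ∈ T) := by
  change mu M {s} = mu M {t} ↔ _
  have self : ∀ x : X, x ∈ mu M {x} := fun x T hT => hT.2 rfl
  constructor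
  · intro h T hT
    constructor
    · intro hs
      have h1 : t ∈ mu M {s} := h ▸ self t
      exact h1 T ⟨hT, by simpa using hs⟩
    · intro ht
      have h1 : s ∈ mu M {t} := h ▸ self s
      exact h1 T ⟨hT, by simpa using ht⟩
  · intro h
    unfold mu
    congr 1
    ext T
    simp only [Set.mem_setOf_eq, Set.singleton_subset_iff]
    exact and_congr_right (fun hT => h T hT)

theorem stmt16 (M : Set (Set X)) (hM : IsMoore M) :
    ((∃ P : Setoid X, M = padS P) ↔ (∀ T ∈ M, Tᶜ ∈ M)) ∧
    (∀ P : Setoid X, M = padS P → P = prS M) := by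
  refine ⟨⟨?_, ?_⟩, ?_⟩
  · rintro ⟨P, rfl⟩ T hT s hs t hst ht
    exact hs (hT t ht s (P.iseqv.symm hst))
  · intro hc
    refine ⟨prS M, ?_⟩
    ext S
    constructor
    · intro hS s hs t hst
      exact ((prS_iff_aux M s t).1 hst S hS).1 hs
    · intro hS
      have hmu : ∀ s, mu M {s} ∈ M := fun s => hM _ (fun T hT => hT.1)
      have key : (⋂₀ ((fun s => (mu M {s})ᶜ) '' S))ᶜ ∈ M := by
        apply hc
        apply hM
        rintro _ ⟨s, -, rfl⟩
        exact hc _ (hmu s)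
      have e : S = (⋂₀ ((fun s => (mu M {s})ᶜ) '' S))ᶜ := by
        ext t
        simp only [Set.mem_compl_iff, Set.sInter_image, Set.mem_iInter, not_forall, not_not]
        constructor
        · intro ht
          exact ⟨t, ht, fun T hT => hT.2 rfl⟩
        · rintro ⟨s, hs, hts⟩
          refine hS s hs t ((prS_iff_aux M s t).2 fun T hT => ⟨fun h => ?_, fun h => ?_⟩)
          · exact hts T ⟨hT, by simpa using h⟩
          · by_contra hn
            exact hts Tᶜ ⟨hc T hT, by simpa using hn⟩ h
      rw [e]
      exact key
  · rintro P rfl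
    ext s t
    change P.r s t ↔ (prS (padS P)).r s t
    rw [prS_iff_aux]
    constructor
    · intro h T hT
      exact ⟨fun hs => hT s hs t h, fun ht => hT t ht s (P.iseqv.symm h)⟩
    · intro h
      exact (h {x | P.r s x} (fun a ha b hab => P.iseqv.trans ha hab)).1 (P.iseqv.refl s)
end

section
/- Let Σ be a set and f : ℘(Σ) → ℘(Σ) a function preserving arbitrary unions (an additive function, such as the predecessor operator pre of a transition relation). Then for every Moore family 𝒜 on Σ: D(M({f(X) : X ∈ D(𝒜)})) = D(M({f(X) : X ∈ 𝒜})). (That is, the disjunctive-completion abstraction is backward complete for the operator 𝒳 ↦ M(f(𝒳)).) -/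
set_option linter.unusedVariables false

universe u v

variable {X : Type u} {A : Type v}

theorem dClose_char (M : Set (Set X)) (S : Set X) (hS : S ∈ dClose M) :
    ∀ s ∈ S, mu M {s} ⊆ S := by
  refine hS {S | ∀ s ∈ S, mu M {s} ⊆ S} ⟨⟨?_, ?_⟩, ?_⟩
  · intro C hC s hs x hx T hT
    exact hC hT s (hs T hT) hx
  · rintro C hC s ⟨T, hT, hs⟩ x hx
    exact ⟨T, hT, hC hT s hs hx⟩
  · intro T hT s hs x hx
    exact hx T ⟨hT, by simpa using hs⟩

theorem stmt17 (f : Set X → Set X)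
    (hf : ∀ C : Set (Set X), f (⋃₀ C) = ⋃ S ∈ C, f S)
    (M : Set (Set X)) (hM : IsMoore M) :
    dClose (mClose (f '' dClose M)) = dClose (mClose (f '' M)) := by
  apply Set.Subset.antisymm
  · rintro T hT N ⟨hN, hMN⟩
    refine hT N ⟨hN, ?_⟩
    intro T' hT'
    refine hT' N ⟨hN.1, ?_⟩
    rintro _ ⟨S, hS, rfl⟩
    have hfM : ∀ Y ∈ M, f Y ∈ N := fun Y hY =>
      hMN (fun K hK => hK.2 ⟨Y, hY, rfl⟩)
    have hSeq : S = ⋃₀ ((fun s => mu M {s}) '' S) := by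
      ext x
      constructor
      · intro hx
        refine ⟨mu M {x}, ⟨x, hx, rfl⟩, ?_⟩
        intro T hT
        exact hT.2 rfl
      · rintro ⟨_, ⟨s, hs, rfl⟩, hx⟩
        exact dClose_char M S hS s hs hx
    rw [hSeq, hf, ← Set.sUnion_image]
    apply hN.2
    rintro _ ⟨_, ⟨s, hs, rfl⟩, rfl⟩
    exact hfM _ (hM _ (fun T hT => hT.1))
  · rintro T hT N ⟨hN, hMN⟩
    refine hT N ⟨hN, ?_⟩
    intro T' hT'
    apply hMN
    rintro K ⟨hK, hK2⟩
    refine hT' K ⟨hK, ?_⟩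
    rintro _ ⟨Y, hY, rfl⟩
    exact hK2 ⟨Y, fun L hL => hL.2 hY, rfl⟩
end

section
/- Let Σ be a set and 𝒜 a Moore family on Σ. For every s ∈ Σ, the least member of D(𝒜) containing s equals the least member of 𝒜 containing s; consequently pr(D(𝒜)) = pr(𝒜), i.e. a Moore family and its disjunctive completion induce the same partition of Σ. -/
set_option linter.unusedVariables false

universe u v

variable {X : Type u} {A : Type v}

theorem stmt18 (M : Set (Set X)) (hM : IsMoore M) :
    (∀ s : X, mu (dClose M) {s} = mu M {s}) ∧ prS (dClose M) = prS M := by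
  have key : ∀ s : X, mu (dClose M) {s} = mu M {s} := by
    intro s
    apply Set.Subset.antisymm
    · intro x hx T hT
      exact hx T ⟨fun N hN => hN.2 hT.1, hT.2⟩
    · intro x hx T hT
      have hN : T ∈ {T : Set X | ∀ s ∈ T, mu M {s} ⊆ T} := by
        refine hT.1 _ ⟨⟨?_, ?_⟩, ?_⟩
        · intro S hS s hs y hy U hU
          exact hS hU s (hs U hU) hy
        · rintro S hS s ⟨U, hU, hsU⟩ y hy
          exact ⟨U, hU, hS hU s hsU hy⟩
        · intro U hU s hs y hy
          exact hy U ⟨hU, Set.singleton_subset_iff.2 hs⟩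
      exact hN s (hT.2 rfl) hx
  refine ⟨key, ?_⟩
  ext s t
  change mu (dClose M) {s} = mu (dClose M) {t} ↔ mu M {s} = mu M {t}
  rw [key, key]
end

section
/- Let Σ be a set, 𝒜 a disjunctive Moore family on Σ with closure μ, and f : ℘(Σ) → ℘(Σ) a function preserving arbitrary unions (such as the predecessor operator pre of a transition relation). Then f(X) ∈ 𝒜 for every X ∈ 𝒜 if and only if f(μ({s})) ∈ 𝒜 for every s ∈ Σ. (Hence, in refining a disjunctive abstract domain towards forward completeness for f, it suffices to use as refiners the closures of the blocks of the induced partition.) -/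
set_option linter.unusedVariables false

universe u v

variable {X : Type u} {A : Type v}

theorem stmt19 (M : Set (Set X)) (hM : IsDisjMoore M)
    (f : Set X → Set X)
    (hf : ∀ C : Set (Set X), f (⋃₀ C) = ⋃ S ∈ C, f S) :
    (∀ T ∈ M, f T ∈ M) ↔ (∀ s : X, f (mu M {s}) ∈ M) := by
  constructor
  · intro h s
    exact h _ (hM.1 _ (fun T hT => hT.1))
  · intro h T hT
    have e : T = ⋃₀ ((fun s => mu M {s}) '' T) := by
      ext x
      constructor
      · intro hx
        exact ⟨_, ⟨x, hx, rfl⟩, fun U hU => hU.2 rfl⟩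
      · rintro ⟨_, ⟨s, hs, rfl⟩, hx⟩
        exact hx T ⟨hT, by simpa using hs⟩
    have e2 : f T = ⋃₀ (f '' ((fun s => mu M {s}) '' T)) := by
      rw [Set.sUnion_image, ← hf, ← e]
    rw [e2]
    apply hM.2
    rintro _ ⟨_, ⟨s, hs, rfl⟩, rfl⟩
    exact h s
end
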